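/- Let X = (X, ω_X) and Y = (Y, ω_Y) be shortest-distance digraphs with the same number of vertices and let φ : X → Y be a bijection. Then for every nonempty subset σ ⊆ X, the walk-length filtration values satisfy f_Y(φ(σ)) ≤ f_X(σ) + dis¹(φ), where φ(σ) = { φ(x) : x ∈ σ }. -/

import Mathlib

/-!
In a shortest-distance digraph, the infimum defining the walk-length filtration may be computed
on walks without repeated vertices: by the triangle inequality and nonnegativity, deleting
vertices of a walk does not increase its weight (`walkWeight_le_of_sublist`), so every walk may be
replaced by its deduplication, which visits the same vertices. The consecutive pairs of a
repetition-free walk are pairwise distinct, so transporting it along `φ` changes its weight by at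
most a sum of *distinct* terms of `dis¹(φ)` (`walkWeight_map_le`).
-/

variable {X Y : Type*}

/-- The weight of a walk in a network (complete weighted digraph), given as a list of
vertices: the sum of the weights of consecutive pairs. -/
def walkWeight (ω : X → X → ℝ) (l : List X) : ℝ :=
  ((l.zip l.tail).map fun p => ω p.1 p.2).sum

/-- The walk-length filtration value of a set of vertices of a network: the infimum of the
weights of walks containing all vertices of `σ`. -/
noncomputable def wlf (ω : X → X → ℝ) (σ : Set X) : ℝ :=
  sInf {c | ∃ l : List X, l ≠ [] ∧ (∀ v ∈ σ, v ∈ l) ∧ walkWeight ω l = c}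

/-- The ℓ1-distortion of a map `φ : X → Y` between networks. -/
noncomputable def dis1map [Fintype X] (ωX : X → X → ℝ) (ωY : Y → Y → ℝ) (φ : X → Y) : ℝ :=
  ∑ x : X, ∑ x' : X, |ωX x x' - ωY (φ x) (φ x')|

theorem walkWeight_cons_cons (ω : X → X → ℝ) (a b : X) (l : List X) :
    walkWeight ω (a :: b :: l) = ω a b + walkWeight ω (b :: l) := by
  simp [walkWeight]

theorem walkWeight_singleton (ω : X → X → ℝ) (a : X) : walkWeight ω [a] = 0 := by
  simp [walkWeight]

theorem walkWeight_nonneg (ω : X → X → ℝ) (h0 : ∀ a b, 0 ≤ ω a b) (l : List X) :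
    0 ≤ walkWeight ω l := by
  refine List.sum_nonneg ?_
  simp only [List.mem_map]
  rintro _ ⟨p, -, rfl⟩
  exact h0 _ _

theorem walkWeight_le_cons (ω : X → X → ℝ) (h0 : ∀ a b, 0 ≤ ω a b) (a : X) (l : List X) :
    walkWeight ω l ≤ walkWeight ω (a :: l) := by
  cases l with
  | nil => simp [walkWeight]
  | cons b l =>
    rw [walkWeight_cons_cons]
    linarith [h0 a b]

theorem walkWeight_cons_le_cons_cons (ω : X → X → ℝ) (h0 : ∀ a b, 0 ≤ ω a b)
    (htri : ∀ a b c, ω a c ≤ ω a b + ω b c) (a b : X) (l : List X) :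
    walkWeight ω (a :: l) ≤ walkWeight ω (a :: b :: l) := by
  cases l with
  | nil =>
    rw [walkWeight_singleton]
    exact walkWeight_nonneg ω h0 _
  | cons c l =>
    simp only [walkWeight_cons_cons]
    linarith [htri a b c]

/-- Deleting vertices does not increase the weight of a walk. The second conjunct, with a common
starting vertex, is what makes the induction go through. -/
theorem walkWeight_le_of_sublist (ω : X → X → ℝ) (h0 : ∀ a b, 0 ≤ ω a b)
    (htri : ∀ a b c, ω a c ≤ ω a b + ω b c) {l₁ l₂ : List X} (h : l₁.Sublist l₂) :
    walkWeight ω l₁ ≤ walkWeight ω l₂ ∧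
      ∀ a, walkWeight ω (a :: l₁) ≤ walkWeight ω (a :: l₂) := by
  induction h with
  | slnil => exact ⟨le_rfl, fun _ => le_rfl⟩
  | cons b _ ih =>
    exact ⟨ih.1.trans (walkWeight_le_cons ω h0 b _),
      fun a => (ih.2 a).trans (walkWeight_cons_le_cons_cons ω h0 htri a b _)⟩
  | cons_cons b _ ih =>
    refine ⟨ih.2 b, fun a => ?_⟩
    simp only [walkWeight_cons_cons]
    linarith [ih.2 b]

/-- Along a walk without repeated vertices, a map increases the weight by at most its
ℓ1-distortion, since no pair of consecutive vertices occurs twice. -/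
theorem walkWeight_map_le [Fintype X] (ωX : X → X → ℝ) (ωY : Y → Y → ℝ) (φ : X → Y)
    {l : List X} (hl : l.Nodup) :
    walkWeight ωY (l.map φ) ≤ walkWeight ωX l + dis1map ωX ωY φ := by
  classical
  have hnd : (l.zip l.tail).Nodup := by
    refine List.Nodup.of_map Prod.snd ?_
    rw [List.map_snd_zip (by simp)]
    exact hl.tail
  have hmap : walkWeight ωY (l.map φ)
      = ((l.zip l.tail).map fun p => ωY (φ p.1) (φ p.2)).sum := by
    rw [walkWeight, ← List.map_tail, List.zip_map, List.map_map]
    rfl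
  rw [hmap, walkWeight, dis1map, ← Fintype.sum_prod_type',
    ← List.sum_toFinset _ hnd, ← List.sum_toFinset _ hnd]
  calc ∑ p ∈ (l.zip l.tail).toFinset, ωY (φ p.1) (φ p.2)
      ≤ ∑ p ∈ (l.zip l.tail).toFinset,
          (ωX p.1 p.2 + |ωX p.1 p.2 - ωY (φ p.1) (φ p.2)|) :=
        Finset.sum_le_sum fun p _ => by
          linarith [neg_le_abs (ωX p.1 p.2 - ωY (φ p.1) (φ p.2))]
    _ ≤ _ := by
        rw [Finset.sum_add_distrib]
        gcongr
        exact Finset.subset_univ _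

/-- For shortest-distance digraphs `(X, ω_X)` and `(Y, ω_Y)` with the same number of
vertices and a bijection `φ : X → Y`: for every nonempty `σ ⊆ X`,
`f_Y(φ(σ)) ≤ f_X(σ) + dis¹(φ)`. -/
theorem stmt12 [Fintype X] [Fintype Y] [Nonempty X] [Nonempty Y]
    (hcard : Fintype.card X = Fintype.card Y)
    (ωX : X → X → ℝ) (ωY : Y → Y → ℝ)
    (hX0 : ∀ a b, 0 ≤ ωX a b) (hXz : ∀ a b, ωX a b = 0 ↔ a = b)
    (hXtri : ∀ a b c, ωX a c ≤ ωX a b + ωX b c)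
    (hY0 : ∀ a b, 0 ≤ ωY a b) (hYz : ∀ a b, ωY a b = 0 ↔ a = b)
    (hYtri : ∀ a b c, ωY a c ≤ ωY a b + ωY b c)
    (φ : X ≃ Y) (σ : Set X) (hσ : σ.Nonempty) :
    wlf ωY (⇑φ '' σ) ≤ wlf ωX σ + dis1map ωX ωY φ := by
  classical
  rw [← sub_le_iff_le_add]
  refine le_csInf ?_ ?_
  · -- A walk through all of `X` exists, so the infimum on the right is not a junk value.
    exact ⟨_, Finset.univ.toList, by simp [Finset.univ_nonempty.ne_empty], by simp, rfl⟩
  · rintro _ ⟨l, hne, hmem, rfl⟩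
    have hY : wlf ωY (⇑φ '' σ) ≤ walkWeight ωY (l.dedup.map φ) := by
      refine csInf_le ⟨0, ?_⟩ ⟨_, ?_, ?_, rfl⟩
      · rintro _ ⟨m, -, -, rfl⟩
        exact walkWeight_nonneg ωY hY0 m
      · obtain ⟨v, hv⟩ := hσ
        exact List.ne_nil_of_mem (List.mem_map_of_mem (List.mem_dedup.2 (hmem v hv)))
      · rintro _ ⟨v, hv, rfl⟩
        exact List.mem_map_of_mem (List.mem_dedup.2 (hmem v hv))
    have hdis := walkWeight_map_le ωX ωY φ l.nodup_dedup
    have hX := (walkWeight_le_of_sublist ωX hX0 hXtri l.dedup_sublist).1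
    linarith
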